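/- Let D be a dictionary in a real Hilbert space X whose symmetric convex hull co(D) is compact, let θ ∈ (0,1), and let f ∈ X with ‖f‖_θ < ∞. Then any sequence (f_n) produced by the orthogonal greedy algorithm with target f satisfies ‖f − f_n‖ ≤ 2^θ ((n! V_n)^{θ/n} / n^{θ/2}) · ‖f‖_θ · ε_n(co(D))^θ for all n ≥ 1. -/

import Mathlib

open scoped RealInnerProductSpace

/-- Dyadic entropy number: infimum of all `ε > 0` such that `K` is covered by `2^n`
balls of radius `ε`. -/
noncomputable def entropyNumber {X : Type*} [NormedAddCommGroup X] (n : ℕ) (K : Set X) : ℝ :=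
  sInf {ε : ℝ | 0 < ε ∧ ∃ c : Fin (2 ^ n) → X, K ⊆ ⋃ i, Metric.closedBall (c i) ε}

/-- Symmetric (absolutely) convex hull: closure of the set of finite sums `∑ cᵢ gᵢ`
with `gᵢ ∈ K` and `∑ |cᵢ| ≤ 1`. -/
noncomputable def symConvexHull {X : Type*} [NormedAddCommGroup X] [NormedSpace ℝ X]
    (K : Set X) : Set X :=
  closure {x : X | ∃ (m : ℕ) (c : Fin m → ℝ) (g : Fin m → X),
    (∀ i, g i ∈ K) ∧ (∑ i, |c i|) ≤ 1 ∧ x = ∑ i, c i • g i}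

/-- Volume of the unit Euclidean ball in `ℝⁿ`. -/
noncomputable def unitBallVol (n : ℕ) : ℝ :=
  Real.pi ^ ((n : ℝ) / 2) / Real.Gamma ((n : ℝ) / 2 + 1)

/-- Span of the first `n` terms of a sequence. -/
noncomputable def spanFirst {X : Type*} [NormedAddCommGroup X] [NormedSpace ℝ X]
    (f : ℕ → X) (n : ℕ) : Submodule ℝ X :=
  Submodule.span ℝ (f '' {i | i < n})

/-- The weak greedy algorithm with parameter `γ`: `f n` (the `(n+1)`-st iterate) lies in `K`
and its distance to the span of the previous iterates is at least `γ` times that of any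
other element of `K`. -/
def IsWeakGreedy {X : Type*} [NormedAddCommGroup X] [NormedSpace ℝ X]
    (γ : ℝ) (K : Set X) (f : ℕ → X) : Prop :=
  ∀ n : ℕ, f n ∈ K ∧ ∀ g ∈ K,
    γ * Metric.infDist g (spanFirst f n : Set X) ≤ Metric.infDist (f n) (spanFirst f n : Set X)

/-- The greedy error `σ_n(K) = sup_{f ∈ K} dist(f, span{f_1,…,f_n})`. -/
noncomputable def greedyError {X : Type*} [NormedAddCommGroup X] [NormedSpace ℝ X]
    (K : Set X) (f : ℕ → X) (n : ℕ) : ℝ :=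
  sSup ((fun g => Metric.infDist g (spanFirst f n : Set X)) '' K)

/-- Kolmogorov `n`-width. -/
noncomputable def kolmogorovWidth {X : Type*} [NormedAddCommGroup X] [NormedSpace ℝ X]
    (n : ℕ) (K : Set X) : ℝ :=
  sInf {d : ℝ | ∃ Y : Submodule ℝ X, FiniteDimensional ℝ Y ∧ Module.finrank ℝ Y ≤ n ∧
    d = sSup ((fun g => Metric.infDist g (Y : Set X)) '' K)}

/-- `f` admits an `ℓ¹` representation over the dictionary `D`. -/
def HasL1Rep {X : Type*} [NormedAddCommGroup X] [NormedSpace ℝ X] (D : Set X) (f : X) : Prop :=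
  ∃ (c : ℕ → ℝ) (g : ℕ → X), (∀ i, g i ∈ D) ∧ Summable (fun i => |c i|) ∧
    HasSum (fun i => c i • g i) f

/-- The variation norm `‖f‖_{L₁(D)}`. -/
noncomputable def varNorm {X : Type*} [NormedAddCommGroup X] [NormedSpace ℝ X]
    (D : Set X) (f : X) : ℝ :=
  sInf {t : ℝ | ∃ (c : ℕ → ℝ) (g : ℕ → X), (∀ i, g i ∈ D) ∧ Summable (fun i => |c i|) ∧
    HasSum (fun i => c i • g i) f ∧ t = ∑' i, |c i|}

/-- The orthogonal greedy algorithm with target `f`: `fa 0 = 0`; at each step `g n ∈ D`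
maximizes `|⟨g, f - fa n⟩|` over `D`, and `fa (n+1)` is the orthogonal projection of `f`
onto `span{g 0, …, g n}`. -/
def IsOGA {X : Type*} [NormedAddCommGroup X] [InnerProductSpace ℝ X]
    (D : Set X) (f : X) (g fa : ℕ → X) : Prop :=
  fa 0 = 0 ∧ ∀ n : ℕ,
    g n ∈ D ∧ (∀ h ∈ D, |⟪h, f - fa n⟫| ≤ |⟪g n, f - fa n⟫|) ∧
    fa (n + 1) ∈ Submodule.span ℝ (g '' {i | i ≤ n}) ∧
    ∀ w ∈ Submodule.span ℝ (g '' {i | i ≤ n}), ⟪f - fa (n + 1), w⟫ = 0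

/-- Best `n`-term approximation error `E_n(f, D)`. -/
noncomputable def bestNTermError {X : Type*} [NormedAddCommGroup X] [NormedSpace ℝ X]
    (D : Set X) (n : ℕ) (f : X) : ℝ :=
  sInf {r : ℝ | ∃ (c : Fin n → ℝ) (g : Fin n → X), (∀ i, g i ∈ D) ∧ r = ‖f - ∑ i, c i • g i‖}

/-- The K-functional `K(t, g)` between `X` and `L₁(D)`. -/
noncomputable def Kfunctional {X : Type*} [NormedAddCommGroup X] [NormedSpace ℝ X]
    (D : Set X) (t : ℝ) (gg : X) : ℝ :=
  sInf {s : ℝ | ∃ h : X, HasL1Rep D h ∧ s = ‖gg - h‖ + t * varNorm D h}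

/-- The interpolation norm `‖g‖_θ = sup_{t > 0} t^{-θ} K(t, g)`. -/
noncomputable def interpNorm {X : Type*} [NormedAddCommGroup X] [NormedSpace ℝ X]
    (D : Set X) (θ : ℝ) (gg : X) : ℝ :=
  sSup ((fun t => t ^ (-θ) * Kfunctional D t gg) '' Set.Ioi (0 : ℝ))

open InnerProductSpace MeasureTheory

/-- The volume of the cross-polytope in `ℝⁿ` is `2ⁿ / n!`. -/
theorem volume_crossPolytope {n : ℕ} (hn : 1 ≤ n) :
    volume {x : Fin n → ℝ | ∑ i, |x i| ≤ 1} = ENNReal.ofReal (2 ^ n / n.factorial) := by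
  have : Nonempty (Fin n) := ⟨⟨0, hn⟩⟩
  simpa [one_add_one_eq_two, Real.Gamma_nat_eq_factorial] using
    MeasureTheory.volume_sum_rpow_le (Fin n) (le_refl (1 : ℝ)) 1

theorem unitBallVol_pos (n : ℕ) : 0 < unitBallVol n :=
  div_pos (Real.rpow_pos_of_pos Real.pi_pos _) (Real.Gamma_pos_of_pos (by positivity))

theorem volume_closedBall_eq_unitBallVol {n : ℕ} (hn : 1 ≤ n) (x : EuclideanSpace ℝ (Fin n))
    {r : ℝ} (hr : 0 ≤ r) :
    volume (Metric.closedBall x r) = ENNReal.ofReal (r ^ n * unitBallVol n) := by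
  have hsqrt : √Real.pi ^ n = Real.pi ^ ((n : ℝ) / 2) := by
    rw [Real.sqrt_eq_rpow, ← Real.rpow_mul_natCast Real.pi_pos.le]
    congr 1
    ring
  have : Nonempty (Fin n) := ⟨⟨0, hn⟩⟩
  rw [EuclideanSpace.volume_closedBall, ENNReal.ofReal_mul (pow_nonneg hr n),
    ENNReal.ofReal_pow hr, unitBallVol, Fintype.card_fin, hsqrt]

/-- Volume comparison: if the image of the cross-polytope under a matrix `A` is covered by `N`
Euclidean balls of radius `ε`, then `|det A| 2ⁿ / n! ≤ N εⁿ Vₙ`. -/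
theorem abs_det_mul_le_of_crossPolytope_cover {n N : ℕ} (hn : 1 ≤ n)
    (A : Matrix (Fin n) (Fin n) ℝ) {ε : ℝ} (hε : 0 ≤ ε) (c : Fin N → EuclideanSpace ℝ (Fin n))
    (hcov : ∀ x : Fin n → ℝ, ∑ i, |x i| ≤ 1 →
      ∃ k, WithLp.toLp 2 (A.mulVec x) ∈ Metric.closedBall (c k) ε) :
    |A.det| * (2 ^ n / n.factorial) ≤ N * (ε ^ n * unitBallVol n) := by
  have hsub : (Matrix.toLin' A) '' {x : Fin n → ℝ | ∑ i, |x i| ≤ 1} ⊆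
      ⋃ k, (WithLp.toLp 2) ⁻¹' Metric.closedBall (c k) ε := by
    rintro _ ⟨x, hx, rfl⟩
    obtain ⟨k, hk⟩ := hcov x hx
    exact Set.mem_iUnion.2 ⟨k, by simpa using hk⟩
  have hball : ∀ k, volume ((WithLp.toLp 2 : (Fin n → ℝ) → _) ⁻¹' Metric.closedBall (c k) ε) =
      ENNReal.ofReal (ε ^ n * unitBallVol n) := fun k => by
    rw [(PiLp.volume_preserving_toLp (Fin n)).measure_preimage
      Metric.isClosed_closedBall.measurableSet.nullMeasurableSet,
      volume_closedBall_eq_unitBallVol hn _ hε]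
  have hvol := (measure_mono hsub).trans (measure_iUnion_le (μ := volume) _)
  rw [Measure.addHaar_image_linearMap, LinearMap.det_toLin', volume_crossPolytope hn,
    ← ENNReal.ofReal_mul (abs_nonneg _), tsum_fintype, Finset.sum_congr rfl fun k _ => hball k,
    Finset.sum_const, Finset.card_univ, Fintype.card_fin, nsmul_eq_mul,
    ← ENNReal.ofReal_natCast, ← ENNReal.ofReal_mul (Nat.cast_nonneg _)] at hvol
  have hV := (unitBallVol_pos n).le
  exact (ENNReal.ofReal_le_ofReal_iff (by positivity)).1 hvol

section

variable {X : Type*} [NormedAddCommGroup X] [InnerProductSpace ℝ X]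

/-- The product of the Gram–Schmidt norms of elements of `D` is controlled by the radius of any
cover of the symmetric convex hull of `D` by `2ⁿ` balls. -/
theorem prod_norm_gramSchmidt_le_of_cover {D : Set X} {g : ℕ → X} (hg : ∀ i, g i ∈ D) {n : ℕ}
    (hn : 1 ≤ n) {ε : ℝ} (hε : 0 ≤ ε) (c : Fin (2 ^ n) → X)
    (hcov : symConvexHull D ⊆ ⋃ i, Metric.closedBall (c i) ε) :
    ∏ i ∈ Finset.range n, ‖gramSchmidt ℝ g i‖ ≤ n.factorial * unitBallVol n * ε ^ n := by
  have hV := (unitBallVol_pos n).le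
  by_cases hzero : ∃ i ∈ Finset.range n, gramSchmidt ℝ g i = 0
  · obtain ⟨i, hi, hgi⟩ := hzero
    rw [Finset.prod_eq_zero hi (by simp [hgi])]
    positivity
  push Not at hzero
  have hne : ∀ i : Fin n, ‖gramSchmidt ℝ g i‖ ≠ 0 := fun i =>
    norm_ne_zero_iff.2 (hzero i (Finset.mem_range.2 i.2))
  let e : Fin n → X := fun i => ‖gramSchmidt ℝ g i‖⁻¹ • gramSchmidt ℝ g i
  have he : Orthonormal ℝ e := by
    refine ⟨fun i => ?_, fun i j hij => ?_⟩
    · simp [e, norm_smul, hne i]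
    · simp [e, inner_smul_left, inner_smul_right,
        gramSchmidt_orthogonal ℝ g (Fin.val_injective.ne hij)]
  let φ : X → EuclideanSpace ℝ (Fin n) := fun x => WithLp.toLp 2 fun i => ⟪e i, x⟫
  have hφ : ∀ x y, dist (φ x) (φ y) ≤ dist x y := fun x y => by
    rw [EuclideanSpace.dist_eq, dist_eq_norm x y]
    refine Real.sqrt_le_iff.2 ⟨norm_nonneg _, ?_⟩
    refine le_trans (le_of_eq ?_) (he.sum_inner_products_le (s := Finset.univ) (x := x - y))
    simp [φ, inner_sub_right, Real.dist_eq]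
  let A : Matrix (Fin n) (Fin n) ℝ := Matrix.of fun i j => ⟪e i, g j⟫
  have hA : A.IsUpperTriangular := fun i j hij => by
    simp [A, e, inner_smul_left, gramSchmidt_inv_triangular ℝ g (show (j : ℕ) < i from hij)]
  have hdiag : ∀ i, A i i = ‖gramSchmidt ℝ g i‖ := fun i => by
    have hself : ⟪gramSchmidt ℝ g i, g i⟫ = ‖gramSchmidt ℝ g i‖ ^ 2 := by
      conv_lhs => rw [gramSchmidt_def'' ℝ g i]
      rw [inner_add_right, inner_sum, Finset.sum_eq_zero, real_inner_self_eq_norm_sq, add_zero]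
      intro k hk
      rw [inner_smul_right, gramSchmidt_orthogonal ℝ g (Finset.mem_Iio.1 hk).ne', mul_zero]
    have := hne i
    simp only [A, e, Matrix.of_apply, inner_smul_left, hself, RCLike.conj_to_real]
    field_simp
  have hdet : |A.det| = ∏ i ∈ Finset.range n, ‖gramSchmidt ℝ g i‖ := by
    rw [Matrix.det_of_isUpperTriangular hA, Finset.prod_congr rfl fun i _ => hdiag i,
      Fin.prod_univ_eq_prod_range (fun i => ‖gramSchmidt ℝ g i‖),
      abs_of_nonneg (Finset.prod_nonneg fun _ _ => norm_nonneg _)]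
  have hmain := abs_det_mul_le_of_crossPolytope_cover hn A hε (fun k => φ (c k)) fun x hx => by
    have hmem : ∑ i, x i • g i ∈ symConvexHull D :=
      subset_closure ⟨n, x, fun i => g i, fun i => hg i, hx, rfl⟩
    obtain ⟨k, hk⟩ := Set.mem_iUnion.1 (hcov hmem)
    refine ⟨k, ?_⟩
    have hAx : WithLp.toLp 2 (A.mulVec x) = φ (∑ i, x i • g i) := by
      ext i
      simp [φ, A, Matrix.mulVec, dotProduct, inner_sum, inner_smul_right, mul_comm]
    rw [hAx]
    exact (hφ _ _).trans hk
  rw [hdet] at hmain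
  push_cast at hmain
  have hfac : (0 : ℝ) < n.factorial := by positivity
  have h2 : (0 : ℝ) < 2 ^ n := by positivity
  rw [mul_div_assoc', div_le_iff₀ hfac] at hmain
  refine le_of_mul_le_mul_right (hmain.trans_eq ?_) h2
  ring

/-- Elements with an `ℓ¹` representation pair with `r` with constant at most the variation norm
times a bound for the pairings of `r` with the dictionary. -/
theorem inner_le_varNorm_mul {D : Set X} {h r : X} (hh : HasL1Rep D h) {G : ℝ}
    (hG : ∀ g ∈ D, |⟪g, r⟫| ≤ G) : ⟪h, r⟫ ≤ varNorm D h * G := by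
  have hrep : ∀ t ∈ {t : ℝ | ∃ (c : ℕ → ℝ) (g : ℕ → X), (∀ i, g i ∈ D) ∧
      Summable (fun i => |c i|) ∧ HasSum (fun i => c i • g i) h ∧ t = ∑' i, |c i|},
      ⟪h, r⟫ ≤ t * G := by
    rintro _ ⟨c, g, hg, hc, hsum, rfl⟩
    have h1 : HasSum (fun i => ⟪c i • g i, r⟫) ⟪h, r⟫ :=
      (hsum.mapL ((innerSL ℝ).flip r))
    have h2 : HasSum (fun i => |c i| * G) ((∑' i, |c i|) * G) := hc.hasSum.mul_right G
    refine hasSum_le (fun i => ?_) h1 h2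
    rw [real_inner_smul_left]
    refine (le_abs_self _).trans ?_
    rw [abs_mul]
    exact mul_le_mul_of_nonneg_left (hG _ (hg i)) (abs_nonneg _)
  obtain ⟨c, g, hg, hc, hsum⟩ := hh
  have hG0 : 0 ≤ G := (abs_nonneg _).trans (hG _ (hg 0))
  rcases hG0.eq_or_lt with rfl | hGpos
  · simpa using hrep _ ⟨c, g, hg, hc, hsum, rfl⟩
  · rw [← div_le_iff₀ hGpos]
    exact le_csInf ⟨_, c, g, hg, hc, hsum, rfl⟩ fun t ht => (div_le_iff₀ hGpos).2 (hrep t ht)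

theorem varNorm_nonneg (D : Set X) (h : X) : 0 ≤ varNorm D h := by
  refine Real.sInf_nonneg ?_
  rintro _ ⟨c, g, -, -, -, rfl⟩
  exact tsum_nonneg fun i => abs_nonneg _

/-- Arithmetic–geometric mean inequality for `∑ 1 / aₖ²`. -/
theorem inv_sq_le_sum_inv_sq_of_prod_le {n : ℕ} (hn : 1 ≤ n) {a : ℕ → ℝ}
    (ha : ∀ k < n, 0 < a k) {t : ℝ} (ht : 0 < t)
    (hprod : ∏ k ∈ Finset.range n, a k ≤ (√n * t) ^ n) :
    (t ^ 2)⁻¹ ≤ ∑ k ∈ Finset.range n, (a k ^ 2)⁻¹ := by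
  have hn0 : (0 : ℝ) < n := by exact_mod_cast hn
  have hamgm := Real.geom_mean_le_arith_mean (Finset.range n) (fun _ => 1)
    (fun k => (a k ^ 2)⁻¹) (fun _ _ => zero_le_one) (by simpa using hn0)
    (fun k _ => by positivity)
  simp only [Real.rpow_one, one_mul, Finset.sum_const, Finset.card_range, nsmul_eq_mul,
    mul_one, Finset.prod_inv_distrib, Finset.prod_pow] at hamgm
  have hpos : 0 < ∏ k ∈ Finset.range n, a k :=
    Finset.prod_pos fun k hk => ha k (Finset.mem_range.1 hk)
  have hle : ((n : ℝ) * t ^ 2)⁻¹ ≤ (((∏ k ∈ Finset.range n, a k) ^ 2)⁻¹) ^ ((n : ℝ)⁻¹) := by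
    rw [← Real.pow_rpow_inv_natCast (x := ((n : ℝ) * t ^ 2)⁻¹) (by positivity)
      (Nat.one_le_iff_ne_zero.1 hn)]
    refine Real.rpow_le_rpow (by positivity) ?_ (by positivity)
    rw [inv_pow]
    refine inv_anti₀ (by positivity) ?_
    calc (∏ k ∈ Finset.range n, a k) ^ 2 ≤ ((√n * t) ^ n) ^ 2 := by gcongr
      _ = ((n : ℝ) * t ^ 2) ^ n := by
        rw [← pow_mul, mul_comm n 2, pow_mul, mul_pow, Real.sq_sqrt hn0.le]
  have hfin := hle.trans hamgm
  rw [le_div_iff₀ hn0] at hfin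
  refine (le_of_eq ?_).trans hfin
  field_simp

/-- A single step of the scalar recursion behind greedy error bounds. -/
theorem inv_sq_sub_add_le {b b' A M a G : ℝ} (hA : 0 ≤ A) (hM : 0 ≤ M) (ha : 0 ≤ a)
    (hbb' : b' ≤ b) (hb' : A < b') (hdual : b ^ 2 ≤ b * A + M * G)
    (hstep : G ^ 2 ≤ a ^ 2 * (b ^ 2 - b' ^ 2)) :
    0 < M * a ∧ ((b - A) ^ 2)⁻¹ + ((M * a) ^ 2)⁻¹ ≤ ((b' - A) ^ 2)⁻¹ := by
  have hx : 0 < b - A := by linarith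
  have hx' : 0 < b' - A := by linarith
  have hbpos : 0 < b := by linarith
  have hb'pos : 0 < b' := by linarith
  have hsq : (b * (b - A)) ^ 2 ≤ (M * a) ^ 2 * (b ^ 2 - b' ^ 2) := by
    have h1 : b * (b - A) ≤ M * G := by nlinarith
    have h2 : (b * (b - A)) ^ 2 ≤ (M * G) ^ 2 := by
      have : 0 ≤ b * (b - A) := by positivity
      gcongr
    nlinarith [mul_le_mul_of_nonneg_left hstep (sq_nonneg M)]
  have hMa : 0 < M * a := by
    refine (mul_nonneg hM ha).lt_of_ne fun h0 => ?_
    rw [← h0] at hsq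
    have : 0 < (b * (b - A)) ^ 2 := by positivity
    linarith
  refine ⟨hMa, ?_⟩
  have hcross : (b' - A) * b ≤ b' * (b - A) := by nlinarith
  have hcross2 : ((b' - A) * b) ^ 2 ≤ (b' * (b - A)) ^ 2 := by gcongr
  have hkey : (b' - A) ^ 2 * ((M * a) ^ 2 + (b - A) ^ 2) ≤ (M * a) ^ 2 * (b - A) ^ 2 := by
    have hb2 : 0 < b ^ 2 := by positivity
    refine le_of_mul_le_mul_right ?_ hb2
    have hle : (b' - A) ^ 2 ≤ (b - A) ^ 2 := by gcongr
    have e1 := mul_le_mul_of_nonneg_left hcross2 (sq_nonneg (M * a))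
    have e2 := mul_le_mul_of_nonneg_right hsq (sq_nonneg (b - A))
    have e3 := mul_le_mul_of_nonneg_right hle
      (mul_nonneg hb2.le (sq_nonneg (b - A)))
    linarith
  rw [inv_add_inv (by positivity) (by positivity), ← one_div,
    div_le_div_iff₀ (by positivity) (by positivity)]
  linarith

/-- The scalar recursion behind greedy error bounds. -/
theorem le_add_mul_of_greedy_recursion {n : ℕ} (hn : 1 ≤ n) {a b G : ℕ → ℝ} {A M t : ℝ}
    (hA : 0 ≤ A) (hM : 0 ≤ M) (ht : 0 < t) (ha : ∀ k, 0 ≤ a k) (hb : Antitone b)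
    (hdual : ∀ k, b k ^ 2 ≤ b k * A + M * G k)
    (hstep : ∀ k, G k ^ 2 ≤ a k ^ 2 * (b k ^ 2 - b (k + 1) ^ 2))
    (hprod : ∏ k ∈ Finset.range n, a k ≤ (√n * t) ^ n) :
    b n ≤ A + t * M := by
  by_contra! hlt
  have hAb : ∀ k ≤ n, A < b k := fun k hk => by
    nlinarith [hb hk, mul_nonneg ht.le hM]
  have hrec : ∀ k < n, 0 < M * a k ∧
      ((b k - A) ^ 2)⁻¹ + ((M * a k) ^ 2)⁻¹ ≤ ((b (k + 1) - A) ^ 2)⁻¹ := fun k hk =>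
    inv_sq_sub_add_le hA hM (ha k) (hb k.le_succ) (hAb (k + 1) hk) (hdual k) (hstep k)
  have hMpos : 0 < M := pos_of_mul_pos_left (hrec 0 hn).1 (ha 0)
  have hsum : ∀ k ≤ n, ∑ j ∈ Finset.range k, ((M * a j) ^ 2)⁻¹ ≤ ((b k - A) ^ 2)⁻¹ := by
    intro k
    induction k with
    | zero => intro _; simp only [Finset.range_zero, Finset.sum_empty]; positivity
    | succ k ih =>
      intro hk
      rw [Finset.sum_range_succ]
      linarith [ih (by omega), (hrec k hk).2]
  have hsum_le := hsum n le_rfl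
  simp only [mul_pow, mul_inv] at hsum_le
  rw [← Finset.mul_sum] at hsum_le
  have hamgm := inv_sq_le_sum_inv_sq_of_prod_le hn
    (fun k hk => pos_of_mul_pos_right (hrec k hk).1 hM) ht hprod
  have hle : ((t * M) ^ 2)⁻¹ ≤ ((b n - A) ^ 2)⁻¹ := by
    refine le_trans ?_ hsum_le
    rw [mul_pow, mul_inv, mul_comm]
    gcongr
  have hx : 0 < b n - A := by linarith [hAb n le_rfl]
  have hsq := (inv_le_inv₀ (by positivity) (by positivity)).1 hle
  have := le_of_sq_le_sq hsq (by positivity)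
  linarith

namespace IsOGA

variable {D : Set X} {f : X} {g fa : ℕ → X}

theorem mem_span (hoga : IsOGA D f g fa) (k : ℕ) :
    fa k ∈ Submodule.span ℝ (g '' {i | i < k}) := by
  cases k with
  | zero => simp [hoga.1]
  | succ k => simpa only [Nat.lt_succ_iff] using (hoga.2 k).2.2.1

theorem inner_residual_eq_zero (hoga : IsOGA D f g fa) (k : ℕ) {w : X}
    (hw : w ∈ Submodule.span ℝ (g '' {i | i < k})) : ⟪f - fa k, w⟫ = 0 := by
  cases k with
  | zero =>
    have : w = 0 := by simpa using hw
    simp [this]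
  | succ k => exact (hoga.2 k).2.2.2 w (by simpa only [Nat.lt_succ_iff] using hw)

theorem norm_sq_residual_sub (hoga : IsOGA D f g fa) (k : ℕ) :
    ‖fa (k + 1) - fa k‖ ^ 2 = ‖f - fa k‖ ^ 2 - ‖f - fa (k + 1)‖ ^ 2 := by
  have hmono : fa k ∈ Submodule.span ℝ (g '' {i | i < k + 1}) :=
    Submodule.span_mono (Set.image_mono fun i (hi : i < k) => hi.trans k.lt_succ_self)
      (hoga.mem_span k)
  have horth := hoga.inner_residual_eq_zero (k + 1)
    (Submodule.sub_mem _ (hoga.mem_span (k + 1)) hmono)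
  have hsplit : f - fa k = (f - fa (k + 1)) + (fa (k + 1) - fa k) := by abel
  rw [hsplit, norm_add_sq_real, horth]
  ring

theorem antitone_norm_residual (hoga : IsOGA D f g fa) : Antitone fun k => ‖f - fa k‖ :=
  antitone_nat_of_succ_le fun k => by
    refine le_of_sq_le_sq ?_ (norm_nonneg _)
    linarith [hoga.norm_sq_residual_sub k, sq_nonneg ‖fa (k + 1) - fa k‖]

/-- Error reduction in one step of the orthogonal greedy algorithm. -/
theorem sq_inner_le (hoga : IsOGA D f g fa) (k : ℕ) :
    |⟪g k, f - fa k⟫| ^ 2 ≤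
      ‖gramSchmidt ℝ g k‖ ^ 2 * (‖f - fa k‖ ^ 2 - ‖f - fa (k + 1)‖ ^ 2) := by
  have hsub : ∑ i ∈ Finset.Iio k,
      (⟪gramSchmidt ℝ g i, g k⟫ / (‖gramSchmidt ℝ g i‖ : ℝ) ^ 2) • gramSchmidt ℝ g i ∈
      Submodule.span ℝ (g '' {i | i < k}) := by
    change _ ∈ Submodule.span ℝ (g '' Set.Iio k)
    rw [← span_gramSchmidt_Iio ℝ g k]
    exact Submodule.sum_mem _ fun i hi => Submodule.smul_mem _ _
      (Submodule.subset_span ⟨i, Finset.mem_Iio.1 hi, rfl⟩)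
  have hgs : gramSchmidt ℝ g k ∈ Submodule.span ℝ (g '' {i | i < k + 1}) := by
    simpa only [Nat.lt_succ_iff] using! gramSchmidt_mem_span ℝ g (le_refl k)
  have hinner : ⟪g k, f - fa k⟫ = ⟪gramSchmidt ℝ g k, fa (k + 1) - fa k⟫ := by
    have h1 : ⟪f - fa k, g k⟫ = ⟪f - fa k, gramSchmidt ℝ g k⟫ := by
      conv_lhs => rw [gramSchmidt_def'' ℝ g k]
      rw [inner_add_right]
      exact add_eq_left.2 (hoga.inner_residual_eq_zero k hsub)
    have h2 := hoga.inner_residual_eq_zero (k + 1) hgs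
    rw [real_inner_comm, h1, real_inner_comm (fa (k + 1) - fa k),
      show f - fa k = (f - fa (k + 1)) + (fa (k + 1) - fa k) by abel, inner_add_left, h2, zero_add]
  rw [hinner, ← hoga.norm_sq_residual_sub k, ← mul_pow]
  exact pow_le_pow_left₀ (abs_nonneg _) (abs_real_inner_le_norm _ _) 2

theorem norm_sq_residual_le (hoga : IsOGA D f g fa) {h : X} (hh : HasL1Rep D h) (k : ℕ) :
    ‖f - fa k‖ ^ 2 ≤ ‖f - fa k‖ * ‖f - h‖ + varNorm D h * |⟪g k, f - fa k⟫| := by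
  have horth := hoga.inner_residual_eq_zero k (hoga.mem_span k)
  have hvar := inner_le_varNorm_mul hh (hoga.2 k).2.1
  have hcs := real_inner_le_norm (f - fa k) (f - h)
  have hself : ‖f - fa k‖ ^ 2 = ⟪f - fa k, f - h⟫ + ⟪h, f - fa k⟫ := by
    rw [← real_inner_self_eq_norm_sq, real_inner_comm (f - fa k) h, ← inner_add_right,
      sub_add_cancel]
    conv_lhs => rw [inner_sub_right, horth, sub_zero]
  linarith

/-- The error of the orthogonal greedy algorithm is bounded by the K-functional. -/
theorem norm_residual_le_Kfunctional (hoga : IsOGA D f g fa) {n : ℕ} (hn : 1 ≤ n) {t : ℝ}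
    (ht : 0 < t) (hprod : ∏ k ∈ Finset.range n, ‖gramSchmidt ℝ g k‖ ≤ (√n * t) ^ n) :
    ‖f - fa n‖ ≤ Kfunctional D t f := by
  refine le_csInf ⟨_, 0, ⟨0, fun _ => g 0, fun _ => (hoga.2 0).1, ?_, ?_⟩, rfl⟩ ?_
  · simp
  · simp
  · rintro _ ⟨h, hh, rfl⟩
    exact le_add_mul_of_greedy_recursion (b := fun k => ‖f - fa k‖) hn (norm_nonneg _)
      (varNorm_nonneg D h) ht (fun k => norm_nonneg (gramSchmidt ℝ g k))
      hoga.antitone_norm_residual (hoga.norm_sq_residual_le hh) hoga.sq_inner_le hprod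

end IsOGA

theorem Kfunctional_nonneg (D : Set X) {t : ℝ} (ht : 0 ≤ t) (f : X) : 0 ≤ Kfunctional D t f := by
  refine Real.sInf_nonneg ?_
  rintro _ ⟨h, -, rfl⟩
  exact add_nonneg (norm_nonneg _) (mul_nonneg ht (varNorm_nonneg D h))

theorem interpNorm_nonneg (D : Set X) (θ : ℝ) (f : X) : 0 ≤ interpNorm D θ f := by
  refine Real.sSup_nonneg ?_
  rintro _ ⟨t, ht, rfl⟩
  exact mul_nonneg (Real.rpow_nonneg (le_of_lt ht) _) (Kfunctional_nonneg D (le_of_lt ht) f)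

theorem Kfunctional_le_rpow_mul_interpNorm {D : Set X} {θ : ℝ} {f : X}
    (hfbdd : BddAbove ((fun t => t ^ (-θ) * Kfunctional D t f) '' Set.Ioi (0 : ℝ)))
    {t : ℝ} (ht : 0 < t) : Kfunctional D t f ≤ t ^ θ * interpNorm D θ f := by
  have hle : t ^ (-θ) * Kfunctional D t f ≤ interpNorm D θ f := le_csSup hfbdd ⟨t, ht, rfl⟩
  rwa [Real.rpow_neg ht.le, inv_mul_le_iff₀ (Real.rpow_pos_of_pos ht θ)] at hle

end

/-- Bounds by powers of all admissible covering radii pass to the entropy number. -/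
theorem le_mul_entropyNumber_rpow {X : Type*} [NormedAddCommGroup X] {K : Set X}
    (hK : Bornology.IsBounded K) {n : ℕ} {θ b C : ℝ} (hθ : 0 < θ) (hC : 0 ≤ C)
    (hle : ∀ ε > 0, ∀ c : Fin (2 ^ n) → X, K ⊆ ⋃ i, Metric.closedBall (c i) ε → b ≤ C * ε ^ θ) :
    b ≤ C * entropyNumber n K ^ θ := by
  have hε0 : 0 ≤ entropyNumber n K := Real.sInf_nonneg fun ε hε => hε.1.le
  rcases le_or_gt b 0 with hb | hb
  · exact hb.trans (by positivity)
  obtain ⟨R, hR⟩ := hK.subset_closedBall 0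
  have hcov : K ⊆ ⋃ _ : Fin (2 ^ n), Metric.closedBall (0 : X) (max R 1) := by
    refine (hR.trans (Metric.closedBall_subset_closedBall (le_max_left R 1))).trans ?_
    exact Set.subset_iUnion (fun _ : Fin (2 ^ n) => Metric.closedBall (0 : X) (max R 1))
      ⟨0, by positivity⟩
  have hR1 : 0 < max R 1 := lt_max_of_lt_right one_pos
  have hCpos : 0 < C := hC.lt_of_ne fun h0 => by
    have := hle _ hR1 _ hcov
    rw [← h0, zero_mul] at this
    linarith
  have hroot : (b / C) ^ θ⁻¹ ≤ entropyNumber n K := by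
    refine le_csInf ⟨_, hR1, _, hcov⟩ ?_
    rintro ε ⟨hε, c, hc⟩
    rw [Real.rpow_inv_le_iff_of_pos (by positivity) hε.le hθ, div_le_iff₀' hCpos]
    exact hle ε hε c hc
  rwa [Real.rpow_inv_le_iff_of_pos (by positivity) hε0 hθ, div_le_iff₀' hCpos] at hroot

/-- OGA error bound for targets in the interpolation space
`[X, L₁(D)]_{θ,∞}` (Proposition 4.1 of the paper). -/
theorem oga_error_le_interpNorm_entropy
    {X : Type*} [NormedAddCommGroup X] [InnerProductSpace ℝ X] [CompleteSpace X]
    (D : Set X) (hD : IsCompact (symConvexHull D))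
    (θ : ℝ) (hθ : θ ∈ Set.Ioo (0 : ℝ) 1) (f : X)
    (hfbdd : BddAbove ((fun t => t ^ (-θ) * Kfunctional D t f) '' Set.Ioi (0 : ℝ)))
    (g fa : ℕ → X) (hoga : IsOGA D f g fa) (n : ℕ) (hn : 1 ≤ n) :
    ‖f - fa n‖
      ≤ 2 ^ θ * (((n.factorial : ℝ) * unitBallVol n) ^ (θ / n) / (n : ℝ) ^ (θ / 2)) *
          interpNorm D θ f * entropyNumber n (symConvexHull D) ^ θ := by
  have hV := unitBallVol_pos n
  have hn0 : (0 : ℝ) < n := by exact_mod_cast hn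
  have hN := interpNorm_nonneg D θ f
  refine le_mul_entropyNumber_rpow hD.isBounded hθ.1 (by positivity) fun ε hε c hc => ?_
  set B : ℝ := n.factorial * unitBallVol n with hB
  have hBpos : 0 < B := by positivity
  set t : ℝ := B ^ (n : ℝ)⁻¹ * ε / √n with ht_def
  have ht : 0 < t := by positivity
  have hpow : B * ε ^ n = (√n * t) ^ n := by
    rw [ht_def, mul_div_cancel₀ _ (by positivity), mul_pow,
      Real.rpow_inv_natCast_pow hBpos.le (by omega)]
  have hK := hoga.norm_residual_le_Kfunctional hn ht
    ((prod_norm_gramSchmidt_le_of_cover (fun i => (hoga.2 i).1) hn hε.le c hc).trans_eq hpow)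
  have hrpow : t ^ θ = B ^ (θ / n) / (n : ℝ) ^ (θ / 2) * ε ^ θ := by
    rw [ht_def, Real.div_rpow (by positivity) (by positivity),
      Real.mul_rpow (by positivity) hε.le, ← Real.rpow_mul hBpos.le, Real.sqrt_eq_rpow,
      ← Real.rpow_mul hn0.le, inv_mul_eq_div, one_div_mul_eq_div]
    ring
  calc ‖f - fa n‖ ≤ t ^ θ * interpNorm D θ f :=
        hK.trans (Kfunctional_le_rpow_mul_interpNorm hfbdd ht)
    _ ≤ 2 ^ θ * (t ^ θ * interpNorm D θ f) :=
        le_mul_of_one_le_left (by positivity) (Real.one_le_rpow one_le_two hθ.1.le)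
    _ = _ := by rw [hrpow]; ring
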